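/- Let c₁, c₂, c₃ ∈ 𝔽_p^* and set δ = Σ_{c ∈ 𝔽_p^*} Σ_{x ∈ 𝔽_p^*} χ̄₁(x(c−c₁)) Σ_{y ∈ 𝔽_p^*} χ̄₁(−y c₂) Σ_{z ∈ 𝔽_p^*} χ̄₁(−z²c/(4y) − z c₃). Then δ = p + 1 if c₃² − c₁c₂ = 0; δ = p² + p + 1 if η̄(c₃² − c₁c₂) = 1; and δ = −p² + p + 1 if η̄(c₃² − c₁c₂) = −1. -/

import Mathlib

/-!
Write `S(c)` for the double sum over `y` and `z`, and `q` for the size of the field. Summing over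
`x ≠ 0` first, orthogonality of additive characters turns `δ` into `q S(c₁) - ∑_{c ≠ 0} S(c)`. The
remaining sum over `c` is `-1`, since the exponent is linear in `c`. The substitution `z = y w`
makes the exponent of `S(c₁)` linear in `y`, so that `S(c₁)` counts the zeros `w` of the quadratic
polynomial `(c₁ / 4) w² + c₃ w + c₂`, whose discriminant is `c₃² - c₁ c₂`. This gives
`S(c₁) = q η(c₃² - c₁ c₂) + 1`, where `η` is the quadratic character.
-/

open Finset
open scoped Classical

noncomputable section

/-- `ζ_p = exp(2πi/p)`. -/
def zeta (p : ℕ) : ℂ := Complex.exp (2 * Real.pi * Complex.I / p)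

/-- The canonical additive character of `ℤ/p`: `χ̄₁(c) = ζ_p^c`. -/
def chiBar (p : ℕ) (c : ZMod p) : ℂ := zeta p ^ c.val

/-- The quadratic character of `(ℤ/p)^*`, extended by `η̄(0) = 0`. -/
def etaBar (p : ℕ) (c : ZMod p) : ℂ :=
  if c = 0 then 0 else if IsSquare c then 1 else -1

/-- The quadratic character of `F^*`, extended by `η(0) = 0`. -/
def etaQ (F : Type) [Field F] (x : F) : ℂ :=
  if x = 0 then 0 else if IsSquare x then 1 else -1

/-- The absolute trace map from `F` to `ℤ/p`. -/
def Trq (p : ℕ) (F : Type) [Field F] [Algebra (ZMod p) F] (x : F) : ZMod p :=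
  Algebra.trace (ZMod p) F x

/-- The canonical additive character of `F`: `χ₁(x) = ζ_p^{Tr x}`. -/
def chiQ (p : ℕ) (F : Type) [Field F] [Algebra (ZMod p) F] (x : F) : ℂ :=
  chiBar p (Trq p F x)

/-- The quadratic Gauss sum `G` over `F`. -/
def GaussQ (p : ℕ) (F : Type) [Field F] [Fintype F] [Algebra (ZMod p) F] : ℂ :=
  ∑ x ∈ univ.filter (fun x : F => x ≠ 0), etaQ F x * chiQ p F x

/-- The quadratic Gauss sum `Ḡ` over `ℤ/p`. -/
def GaussP (p : ℕ) [NeZero p] : ℂ :=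
  ∑ y ∈ univ.filter (fun y : ZMod p => y ≠ 0), etaBar p y * chiBar p y

section CommRing

variable {A R : Type*} [CommRing A] [Fintype A] [DecidableEq A] [CommRing R] [IsDomain R]
  {ψ : AddChar A R}

lemma sum_ne_zero_mulShift (hψ : ψ.IsPrimitive) (b : A) :
    ∑ x with x ≠ 0, ψ (x * b) = (if b = 0 then (Fintype.card A : R) else 0) - 1 := by
  rw [filter_ne', sum_erase_eq_sub (mem_univ 0), AddChar.sum_mulShift b hψ, zero_mul,
    AddChar.map_zero_eq_one]
  norm_cast

lemma sum_ne_zero_mulShift_of_ne_zero (hψ : ψ.IsPrimitive) {b : A} (hb : b ≠ 0) :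
    ∑ x with x ≠ 0, ψ (x * b) = -1 := by
  rw [sum_ne_zero_mulShift hψ, if_neg hb, zero_sub]

end CommRing

lemma four_ne_zero_of_ringChar_ne_two {K : Type*} [Semiring K] [Nontrivial K] [NoZeroDivisors K]
    (hK : ringChar K ≠ 2) : (4 : K) ≠ 0 := by
  rw [show (4 : K) = 2 * 2 by norm_num]
  exact mul_ne_zero (Ring.two_ne_zero hK) (Ring.two_ne_zero hK)

section FiniteField

variable {F R : Type*} [Field F] [Fintype F] [DecidableEq F]

lemma card_quadratic_roots (hF : ringChar F ≠ 2) {a : F} (ha : a ≠ 0) (b c : F) :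
    (#{x : F | a * (x * x) + b * x + c = 0} : ℤ) = quadraticChar F (discrim a b c) + 1 := by
  have : NeZero (2 : F) := ⟨Ring.two_ne_zero hF⟩
  rw [← quadraticChar_card_sqrts hF, Nat.cast_inj]
  refine card_bij' (fun x _ ↦ 2 * a * x + b) (fun s _ ↦ (s - b) / (2 * a)) ?_ ?_ ?_ ?_
  · intro x hx
    simpa [quadratic_eq_zero_iff_discrim_eq_sq ha, eq_comm] using hx
  · intro s hs
    have hs : s ^ 2 = discrim a b c := by simpa using hs
    have hx : 2 * a * ((s - b) / (2 * a)) + b = s := by field_simp; ring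
    simp [quadratic_eq_zero_iff_discrim_eq_sq ha, hx, hs]
  · intro x _
    field_simp
    ring
  · intro s _
    field_simp
    ring

variable [CommRing R]

/-- The sum `S(c) = ∑_{y ≠ 0} ψ(-y c₂) ∑_{z ≠ 0} ψ(-z² c / (4y) - z c₃)`, the factor of the `c`-th
term of `δ` that does not involve `x`. -/
def quadraticTwistSum (ψ : AddChar F R) (c₂ c₃ c : F) : R :=
  ∑ y with y ≠ 0, ψ (-(y * c₂)) * ∑ z with z ≠ 0, ψ (-(z ^ 2 * c) / (4 * y) - z * c₃)

lemma quadraticTwistSum_eq_sum_mulShift (ψ : AddChar F R) (c₂ c₃ c : F) :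
    quadraticTwistSum ψ c₂ c₃ c =
      ∑ w with w ≠ 0, ∑ y with y ≠ 0, ψ (y * -(c / 4 * (w * w) + c₃ * w + c₂)) := by
  rw [sum_comm]
  refine sum_congr rfl fun y hy ↦ ?_
  have hy : y ≠ 0 := by simpa using hy
  rw [mul_sum]
  refine (sum_equiv (Equiv.mulLeft₀ y hy) (by simp [hy]) fun w _ ↦ ?_).symm
  rw [← AddChar.map_add_eq_mul]
  congr 1
  change _ = -(y * c₂) + (-((y * w) ^ 2 * c) / (4 * y) - y * w * c₃)
  field_simp
  ring

variable [IsDomain R] {ψ : AddChar F R}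

lemma quadraticTwistSum_eq_quadraticChar (hF : ringChar F ≠ 2) (hψ : ψ.IsPrimitive)
    {c₂ c : F} (c₃ : F) (hc₂ : c₂ ≠ 0) (hc : c ≠ 0) :
    quadraticTwistSum ψ c₂ c₃ c =
      Fintype.card F * (quadraticChar F (c₃ ^ 2 - c * c₂) : R) + 1 := by
  have four_ne : (4 : F) ≠ 0 := four_ne_zero_of_ringChar_ne_two hF
  have discrim_eq : discrim (c / 4) c₃ c₂ = c₃ ^ 2 - c * c₂ := by
    rw [discrim]
    field_simp
  have card_roots : (#{w : F | c / 4 * (w * w) + c₃ * w + c₂ = 0} : R) =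
      quadraticChar F (c₃ ^ 2 - c * c₂) + 1 := by
    rw [← discrim_eq]
    exact_mod_cast congrArg (Int.cast : ℤ → R)
      (card_quadratic_roots hF (div_ne_zero hc four_ne) c₃ c₂)
  simp only [quadraticTwistSum_eq_sum_mulShift, sum_ne_zero_mulShift hψ, neg_eq_zero]
  -- `w = 0` is not a root, so the restriction `w ≠ 0` costs only a constant.
  rw [filter_ne', sum_erase_eq_sub (mem_univ 0), sum_sub_distrib, ← sum_filter, sum_const,
    sum_const, card_univ, nsmul_eq_mul, nsmul_eq_mul, card_roots, if_neg (by simpa using hc₂)]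
  ring

lemma sum_ne_zero_quadraticTwistSum (hF : ringChar F ≠ 2) (hψ : ψ.IsPrimitive) {c₂ c₃ : F}
    (hc₂ : c₂ ≠ 0) (hc₃ : c₃ ≠ 0) : ∑ c with c ≠ 0, quadraticTwistSum ψ c₂ c₃ c = -1 := by
  have sum_c {y z : F} (hy : y ≠ 0) (hz : z ≠ 0) :
      ∑ c with c ≠ 0, ψ (-(z ^ 2 * c) / (4 * y) - z * c₃) = -ψ (z * -c₃) := by
    have psi_mul (c : F) : ψ (-(z ^ 2 * c) / (4 * y) - z * c₃) =
        ψ (c * (-(z ^ 2) / (4 * y))) * ψ (z * -c₃) := by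
      rw [← AddChar.map_add_eq_mul]
      congr 1
      ring
    have coeff_ne : -(z ^ 2) / (4 * y) ≠ 0 :=
      div_ne_zero (neg_ne_zero.2 (pow_ne_zero 2 hz))
        (mul_ne_zero (four_ne_zero_of_ringChar_ne_two hF) hy)
    simp only [psi_mul]
    rw [← sum_mul, sum_ne_zero_mulShift_of_ne_zero hψ coeff_ne, neg_one_mul]
  have sum_z_c {y : F} (hy : y ≠ 0) :
      ∑ z with z ≠ 0, ∑ c with c ≠ 0, ψ (-(z ^ 2 * c) / (4 * y) - z * c₃) = 1 := by
    rw [sum_congr rfl fun z hz ↦ sum_c hy (by simpa using hz), sum_neg_distrib,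
      sum_ne_zero_mulShift_of_ne_zero hψ (neg_ne_zero.2 hc₃), neg_neg]
  calc
    _ = ∑ y with y ≠ 0, ψ (-(y * c₂)) *
          ∑ z with z ≠ 0, ∑ c with c ≠ 0, ψ (-(z ^ 2 * c) / (4 * y) - z * c₃) := by
      simp only [quadraticTwistSum]
      rw [sum_comm]
      refine sum_congr rfl fun y _ ↦ ?_
      rw [← mul_sum, sum_comm]
    _ = ∑ y with y ≠ 0, ψ (y * -c₂) := by
      refine sum_congr rfl fun y hy ↦ ?_
      rw [sum_z_c (by simpa using hy), mul_one, mul_neg]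
    _ = -1 := sum_ne_zero_mulShift_of_ne_zero hψ (neg_ne_zero.2 hc₂)

theorem delta_eval_general (hF : ringChar F ≠ 2) (hψ : ψ.IsPrimitive) {c₁ c₂ c₃ : F}
    (hc₁ : c₁ ≠ 0) (hc₂ : c₂ ≠ 0) (hc₃ : c₃ ≠ 0) :
    ∑ c with c ≠ 0, ∑ x with x ≠ 0, ψ (x * (c - c₁)) *
      ∑ y with y ≠ 0, ψ (-(y * c₂)) * ∑ z with z ≠ 0, ψ (-(z ^ 2 * c) / (4 * y) - z * c₃) =
    (Fintype.card F : R) ^ 2 * quadraticChar F (c₃ ^ 2 - c₁ * c₂) + Fintype.card F + 1 := by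
  calc
    _ = ∑ c with c ≠ 0, ((if c = c₁ then Fintype.card F * quadraticTwistSum ψ c₂ c₃ c else 0) -
          quadraticTwistSum ψ c₂ c₃ c) := by
      refine sum_congr rfl fun c _ ↦ ?_
      rw [← sum_mul, sum_ne_zero_mulShift hψ, ← quadraticTwistSum, sub_mul, one_mul, ite_mul,
        zero_mul]
      simp only [sub_eq_zero]
    _ = Fintype.card F * quadraticTwistSum ψ c₂ c₃ c₁ + 1 := by
      rw [sum_sub_distrib, sum_ne_zero_quadraticTwistSum hF hψ hc₂ hc₃, sum_ite_eq',
        if_pos (by simpa using hc₁), sub_neg_eq_add]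
    _ = _ := by
      rw [quadraticTwistSum_eq_quadraticChar hF hψ c₃ hc₂ hc₁]
      ring

end FiniteField

lemma chiBar_eq_stdAddChar {p : ℕ} [NeZero p] (c : ZMod p) :
    chiBar p c = ZMod.stdAddChar c := by
  rw [ZMod.stdAddChar_apply, ZMod.toCircle_apply, chiBar, zeta, ← Complex.exp_nat_mul]
  congr 1
  ring

lemma etaBar_eq_quadraticChar {p : ℕ} [Fact p.Prime] (c : ZMod p) :
    etaBar p c = quadraticChar (ZMod p) c := by
  rw [etaBar, quadraticChar_apply, quadraticCharFun]
  split_ifs <;> simp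

theorem delta_eval (p : ℕ) [Fact (Nat.Prime p)] (hp : Odd p)
    (c₁ c₂ c₃ : ZMod p) (hc₁ : c₁ ≠ 0) (hc₂ : c₂ ≠ 0) (hc₃ : c₃ ≠ 0) :
    (c₃ ^ 2 - c₁ * c₂ = 0 →
      (∑ c ∈ univ.filter (fun c : ZMod p => c ≠ 0), ∑ x ∈ univ.filter (fun x : ZMod p => x ≠ 0), chiBar p (x * (c - c₁)) *
      ∑ y ∈ univ.filter (fun y : ZMod p => y ≠ 0), chiBar p (-(y * c₂)) *
        ∑ z ∈ univ.filter (fun z : ZMod p => z ≠ 0), chiBar p (-(z ^ 2 * c) / (4 * y) - z * c₃)) = (p : ℂ) + 1) ∧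
    (etaBar p (c₃ ^ 2 - c₁ * c₂) = 1 →
      (∑ c ∈ univ.filter (fun c : ZMod p => c ≠ 0), ∑ x ∈ univ.filter (fun x : ZMod p => x ≠ 0), chiBar p (x * (c - c₁)) *
      ∑ y ∈ univ.filter (fun y : ZMod p => y ≠ 0), chiBar p (-(y * c₂)) *
        ∑ z ∈ univ.filter (fun z : ZMod p => z ≠ 0), chiBar p (-(z ^ 2 * c) / (4 * y) - z * c₃)) = (p : ℂ) ^ 2 + (p : ℂ) + 1) ∧
    (etaBar p (c₃ ^ 2 - c₁ * c₂) = -1 →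
      (∑ c ∈ univ.filter (fun c : ZMod p => c ≠ 0), ∑ x ∈ univ.filter (fun x : ZMod p => x ≠ 0), chiBar p (x * (c - c₁)) *
      ∑ y ∈ univ.filter (fun y : ZMod p => y ≠ 0), chiBar p (-(y * c₂)) *
        ∑ z ∈ univ.filter (fun z : ZMod p => z ≠ 0), chiBar p (-(z ^ 2 * c) / (4 * y) - z * c₃)) = -((p : ℂ) ^ 2) + (p : ℂ) + 1) := by
  have hF : ringChar (ZMod p) ≠ 2 := by
    rw [ZMod.ringChar_zmod_n]
    rintro rfl
    exact absurd hp (by decide)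
  simp only [chiBar_eq_stdAddChar, etaBar_eq_quadraticChar,
    delta_eval_general hF (ZMod.isPrimitive_stdAddChar p) hc₁ hc₂ hc₃, ZMod.card]
  exact ⟨fun h ↦ by simp [h], fun h ↦ by rw [h, mul_one], fun h ↦ by rw [h, mul_neg_one]⟩
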